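/- Let (G,X) be a flow such that X is 0-dimensional and G is compactly generated by Γ. Then the following are pairwise equivalent: (1) every point of X × X is Γ-recurrent of type I under the diagonal G-action g•(x,y) = (g•x, g•y) on X × X; (2) (G,X) is distal; (3) (G,X) is equicontinuous. -/

import Mathlib

open Pointwise Filter Topology Uniformity

/-- A directed (preordered, nonempty) index relation for nets. -/
def DirIdx {ι : Type} (le : ι → ι → Prop) : Prop :=
  Nonempty ι ∧ (∀ i, le i i) ∧ (∀ i j k, le i j → le j k → le i k) ∧
    ∀ i j, ∃ k, le i k ∧ le j k

/-- The limsup of a net of subsets of a topological space. -/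
def NetLimsup {ι α : Type} [TopologicalSpace α] (le : ι → ι → Prop) (Y : ι → Set α) :
    Set α :=
  {y | ∀ U ∈ 𝓝 y, ∀ i, ∃ j, le i j ∧ (U ∩ Y j).Nonempty}

/-- The Γ-length of a group element: the least `r ≥ 1` with `g ∈ Γ ^ r`. -/
noncomputable def len {G : Type} [Group G] (Γ : Set G) (g : G) : ℕ :=
  sInf {r : ℕ | 1 ≤ r ∧ g ∈ Γ ^ r}

/-- `K(g) = Γ^{|g|-1} · g`. -/
def Kset {G : Type} [Group G] (Γ : Set G) (g : G) : Set G :=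
  Γ ^ (len Γ g - 1) * {g}

/-- A Γ-cone. -/
def IsCone {G : Type} [Group G] [TopologicalSpace G] (Γ : Set G) (C : Set G) : Prop :=
  ∃ (ι : Type) (le : ι → ι → Prop) (g : ι → G),
    DirIdx le ∧
    (∀ i j, le i j → len Γ (g i) ≤ len Γ (g j)) ∧
    (∀ n : ℕ, ∃ i, ∀ j, le i j → n ≤ len Γ (g j)) ∧
    C = NetLimsup le fun i => Kset Γ (g i)

/-- Γ-recurrence of type I of a point of a `G`-space. -/
def RecurrentI {G α : Type} [Group G] [TopologicalSpace G] [TopologicalSpace α]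
    [MulAction G α] (Γ : Set G) (a : α) : Prop :=
  ∀ C : Set G, IsCone Γ C → ∀ U ∈ 𝓝 a, ∃ c ∈ C, c • a ∈ U

theorem aux_pow_compact {G : Type} [Group G] [TopologicalSpace G] [ContinuousMul G]
    {Γ : Set G} (hΓc : IsCompact Γ) (n : ℕ) : IsCompact (Γ ^ n) := by
  induction n with
  | zero => rw [pow_zero]; exact isCompact_singleton
  | succ k ih => rw [pow_succ]; exact ih.mul hΓc

theorem aux_inv_pow {G : Type} [Group G] {Γ : Set G} (hΓinv : Γ⁻¹ = Γ) (n : ℕ) {g : G}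
    (hg : g ∈ Γ ^ n) : g⁻¹ ∈ Γ ^ n := by
  have : (Γ ^ n)⁻¹ = Γ ^ n := by rw [← inv_pow, hΓinv]
  rw [← this]; simpa using hg

theorem aux_pow_mono {G : Type} [Group G] {Γ : Set G} (hΓ1 : (1 : G) ∈ Γ) {m n : ℕ}
    (h : m ≤ n) : Γ ^ m ⊆ Γ ^ n := Set.pow_subset_pow_right hΓ1 h

theorem aux_mem_len {G : Type} [Group G] {Γ : Set G}
    (hΓgen : ∀ g : G, ∃ r : ℕ, 1 ≤ r ∧ g ∈ Γ ^ r) (g : G) : 1 ≤ len Γ g ∧ g ∈ Γ ^ len Γ g :=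
  Nat.sInf_mem (s := {r : ℕ | 1 ≤ r ∧ g ∈ Γ ^ r}) (hΓgen g)

theorem aux_len_le {G : Type} [Group G] {Γ : Set G} {g : G} {r : ℕ} (h1 : 1 ≤ r)
    (h : g ∈ Γ ^ r) : len Γ g ≤ r := Nat.sInf_le (s := {r : ℕ | 1 ≤ r ∧ g ∈ Γ ^ r}) ⟨h1, h⟩

/-- One step of the escaping sequence. -/
theorem aux_escape {G Z : Type} [Group G] [TopologicalSpace G] [ContinuousMul G]
    [TopologicalSpace Z] [MulAction G Z] [ContinuousSMul G Z]
    {Γ : Set G} (hΓc : IsCompact Γ) (hΓ1 : (1 : G) ∈ Γ) (hΓinv : Γ⁻¹ = Γ)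
    (hΓgen : ∀ g : G, ∃ r : ℕ, 1 ≤ r ∧ g ∈ Γ ^ r)
    {W : Set Z} (hW : IsOpen W) {z0 : Z} (h0 : ∀ g : G, g • z0 ∈ W)
    (hn : ¬ ∀ᶠ z in 𝓝 z0, ∀ g : G, g • z ∈ W) (n : ℕ) :
    ∃ (h : G) (y : Z), n ≤ len Γ h ∧ y ∉ W ∧ y ∈ Γ • W ∧ ∀ k ∈ Kset Γ h, k • y ∈ W := by
  classical
  have htube : ∀ᶠ z in 𝓝 z0, ∀ g ∈ Γ ^ (n + 1), g • z ∈ W := by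
    apply (aux_pow_compact hΓc (n + 1)).eventually_forall_of_forall_eventually
    intro g _
    have hc : Continuous fun q : Z × G => q.2 • q.1 := by fun_prop
    exact hc.continuousAt.eventually (hW.mem_nhds (h0 g))
  obtain ⟨z, hz, hz2⟩ := ((not_eventually.mp hn).and_eventually htube).exists
  push Not at hz
  have hex : ∃ m, ∃ g ∈ Γ ^ m, g • z ∉ W := by
    obtain ⟨g, hg⟩ := hz
    obtain ⟨r, _, hr⟩ := hΓgen g
    exact ⟨r, g, hr, hg⟩
  obtain ⟨g, hg, hgz⟩ := Nat.find_spec hex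
  have hmin : ∀ k, k < Nat.find hex → ∀ g ∈ Γ ^ k, g • z ∈ W := by
    intro k hk g hg
    by_contra hcon
    exact Nat.find_min hex hk ⟨g, hg, hcon⟩
  set m := Nat.find hex with hm
  have hmn : n + 1 < m := by
    by_contra hcon
    exact hgz (hz2 g (aux_pow_mono hΓ1 (not_lt.mp hcon) hg))
  have hlen : len Γ g⁻¹ = m := by
    apply le_antisymm
    · exact aux_len_le (by omega) (aux_inv_pow hΓinv m hg)
    · by_contra hcon
      have h1 := (aux_mem_len hΓgen g⁻¹).2
      have h2 := aux_inv_pow hΓinv _ h1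
      rw [inv_inv] at h2
      exact hgz (hmin _ (not_le.mp hcon) g h2)
  refine ⟨g⁻¹, g • z, by omega, hgz, ?_, ?_⟩
  · obtain ⟨k, hk⟩ : ∃ k, m = k + 1 := ⟨m - 1, by omega⟩
    rw [hk, pow_succ', Set.mem_mul] at hg
    obtain ⟨a, ha, b, hb, rfl⟩ := hg
    rw [mul_smul]
    exact Set.smul_mem_smul ha (hmin k (by omega) b hb)
  · intro k hk
    rw [Kset, hlen, Set.mem_mul] at hk
    obtain ⟨a, ha, b, hb, rfl⟩ := hk
    rw [Set.mem_singleton_iff] at hb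
    subst hb
    rw [smul_smul, inv_mul_cancel_right]
    exact hmin (m - 1) (by omega) a ha

theorem aux_star_open {G Z : Type} [Group G] [TopologicalSpace G] [ContinuousMul G]
    [TopologicalSpace Z] [MulAction G Z] [ContinuousSMul G Z]
    {Γ : Set G} (hΓc : IsCompact Γ) (hΓ1 : (1 : G) ∈ Γ) (hΓinv : Γ⁻¹ = Γ)
    (hΓgen : ∀ g : G, ∃ r : ℕ, 1 ≤ r ∧ g ∈ Γ ^ r)
    {W : Set Z} (hW : IsClopen W) (hWc : IsCompact W) (hrec : ∀ z : Z, RecurrentI Γ z)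
    {z0 : Z} (h0 : ∀ g : G, g • z0 ∈ W) :
    ∀ᶠ z in 𝓝 z0, ∀ g : G, g • z ∈ W := by
  by_contra hn
  choose h y hlen hyW hyΓ hK using aux_escape hΓc hΓ1 hΓinv hΓgen hW.isOpen h0 hn
  obtain ⟨φ, hφ, hφ2⟩ := Filter.strictMono_subseq_of_id_le hlen
  have hcpt : IsCompact (Γ • W) := hΓc.smul_set hWc
  obtain ⟨y0, -, hy0⟩ := hcpt.exists_mapClusterPt (u := y ∘ φ) (f := atTop)
    (by
      rw [Filter.le_principal_iff]
      exact Filter.mem_map.mpr (Filter.univ_mem' fun n => hyΓ (φ n)))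
  have hfreq : ∀ V ∈ 𝓝 y0, ∀ n : ℕ, ∃ m, n ≤ m ∧ y (φ m) ∈ V := by
    intro V hV n
    have := (hy0.frequently hV)
    exact Filter.frequently_atTop.mp this n
  have hy0W : y0 ∈ Wᶜ := by
    intro hcon
    obtain ⟨m, -, hm⟩ := hfreq W (hW.isOpen.mem_nhds hcon) 0
    exact hyW _ hm
  let ι : Type := {p : ℕ × Set Z // p.2 ∈ 𝓝 y0 ∧ y (φ p.1) ∈ p.2}
  let le : ι → ι → Prop := fun p q => p.1.1 ≤ q.1.1 ∧ q.1.2 ⊆ p.1.2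
  let g : ι → G := fun p => h (φ p.1.1)
  have hcone : IsCone Γ (NetLimsup le fun i => Kset Γ (g i)) := by
    refine ⟨ι, le, g, ⟨?_, ?_, ?_, ?_⟩, ?_, ?_, rfl⟩
    · exact ⟨⟨(0, Set.univ), Filter.univ_mem, Set.mem_univ _⟩⟩
    · exact fun i => ⟨le_rfl, subset_rfl⟩
    · exact fun i j k h1 h2 => ⟨h1.1.trans h2.1, h2.2.trans h1.2⟩
    · rintro ⟨⟨n, V⟩, hV, hn⟩ ⟨⟨n', V'⟩, hV', hn'⟩
      obtain ⟨m, hm, hm2⟩ := hfreq (V ∩ V') (Filter.inter_mem hV hV') (max n n')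
      exact ⟨⟨(m, V ∩ V'), Filter.inter_mem hV hV', hm2⟩,
        ⟨(le_max_left _ _).trans hm, Set.inter_subset_left⟩,
        ⟨(le_max_right _ _).trans hm, Set.inter_subset_right⟩⟩
    · exact fun i j hij => hφ2.monotone hij.1
    · intro n
      refine ⟨⟨(n, Set.univ), Filter.univ_mem, Set.mem_univ _⟩, fun j hj => ?_⟩
      have h1 : n ≤ j.1.1 := hj.1
      exact h1.trans ((hφ.id_le j.1.1).trans (hlen _))
  obtain ⟨c, hc, hcy⟩ := hrec y0 _ hcone Wᶜ (hW.compl.isOpen.mem_nhds hy0W)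
  have hcont : Continuous fun q : G × Z => q.1 • q.2 := continuous_smul
  have hnh : (fun q : G × Z => q.1 • q.2) ⁻¹' Wᶜ ∈ 𝓝 (c, y0) :=
    hcont.continuousAt.preimage_mem_nhds (hW.compl.isOpen.mem_nhds hcy)
  obtain ⟨N, hN, V, hV, hNV⟩ := mem_nhds_prod_iff.mp hnh
  obtain ⟨m, -, hm⟩ := hfreq V hV 0
  obtain ⟨⟨⟨j, V'⟩, hV', hjV⟩, hj, k, hkN, hkK⟩ := hc N hN ⟨(m, V), hV, hm⟩
  exact hNV (Set.mk_mem_prod hkN (hj.2 hjV)) (hK _ k hkK)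

theorem aux_one_three {G X : Type} [Group G] [TopologicalSpace G]
    [ContinuousMul G] [UniformSpace X] [LocallyCompactSpace X] [T2Space X]
    [MulAction G X] [ContinuousSMul G X]
    (hLag : ∀ x : X, IsCompact (closure (MulAction.orbit G x)))
    {Γ : Set G} (hΓc : IsCompact Γ) (hΓ1 : (1 : G) ∈ Γ) (hΓinv : Γ⁻¹ = Γ)
    (hΓgen : ∀ g : G, ∃ r : ℕ, 1 ≤ r ∧ g ∈ Γ ^ r)
    (h0dim : ∀ x : X, ∀ U ∈ 𝓝 x, ∃ V : Set X, IsClopen V ∧ x ∈ V ∧ V ⊆ U)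
    (h1 : ∀ p : X × X, RecurrentI Γ p) :
    ∀ x : X, ∀ ε ∈ 𝓤 X, ∃ U ∈ 𝓝 x, ∀ y ∈ U, ∀ g : G, (g • y, g • x) ∈ ε := by
  intro x ε hε
  have hloc : ∀ a : X, ∃ V : Set X, IsClopen V ∧ a ∈ V ∧ IsCompact V ∧ V ×ˢ V ⊆ ε := by
    intro a
    obtain ⟨C, hC, hCa⟩ := exists_compact_mem_nhds a
    have h2 : ε ∈ 𝓝 (a, a) := nhds_le_uniformity a hε
    obtain ⟨A, hA, B, hB, hAB⟩ := mem_nhds_prod_iff.mp h2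
    obtain ⟨V, hV, haV, hVs⟩ := h0dim a (C ∩ (A ∩ B))
      (inter_mem hCa (inter_mem hA hB))
    exact ⟨V, hV, haV, hC.of_isClosed_subset hV.isClosed (hVs.trans Set.inter_subset_left),
      (Set.prod_mono (fun v hv => (hVs hv).2.1) (fun v hv => (hVs hv).2.2)).trans hAB⟩
  choose V hV haV hVc hVε using hloc
  obtain ⟨t, -, ht⟩ := (hLag x).elim_nhds_subcover V
    (fun a _ => (hV a).isOpen.mem_nhds (haV a))
  let W : Set (X × X) := ⋃ a ∈ t, V a ×ˢ V a
  have hWclopen : IsClopen W := t.finite_toSet.isClopen_biUnion fun a _ => (hV a).prod (hV a)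
  have hWc : IsCompact W := t.finite_toSet.isCompact_biUnion fun a _ => (hVc a).prod (hVc a)
  have h0 : ∀ g : G, g • (x, x) ∈ W := by
    intro g
    have := ht (subset_closure (MulAction.mem_orbit x g))
    simp only [Set.mem_iUnion] at this
    obtain ⟨a, ha, hga⟩ := this
    exact Set.mem_biUnion ha ⟨hga, hga⟩
  have hev := aux_star_open hΓc hΓ1 hΓinv hΓgen hWclopen hWc h1 h0
  have hcont : ContinuousAt (fun y : X => (y, x)) x := by fun_prop
  refine ⟨_, hcont.eventually hev, fun y hy g => ?_⟩
  have hyg : g • (y, x) ∈ W := hy g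
  simp only [W, Set.mem_iUnion] at hyg
  obtain ⟨a, ha, hga⟩ := hyg
  exact hVε a hga

theorem aux_three_two {G X : Type} [Group G] [UniformSpace X] [T2Space X] [MulAction G X]
    (h3 : ∀ x : X, ∀ ε ∈ 𝓤 X, ∃ U ∈ 𝓝 x, ∀ y ∈ U, ∀ g : G, (g • y, g • x) ∈ ε) :
    ∀ x y : X, x ≠ y →
      closure (Set.range fun g : G => (g • x, g • y)) ∩ Set.diagonal X = ∅ := by
  intro x y hxy
  by_contra hne
  obtain ⟨⟨z, z'⟩, hz, hzz⟩ := Set.nonempty_iff_ne_empty.mpr hne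
  have hzz' : z = z' := hzz
  subst hzz'
  apply hxy
  apply eq_of_uniformity
  intro ε hε
  obtain ⟨δ, hδ, hδs, hδε⟩ := comp_symm_mem_uniformity_sets hε
  obtain ⟨U, hU, hUδ⟩ := h3 z δ hδ
  obtain ⟨_, ⟨hg1, hg2⟩, g, rfl⟩ := mem_closure_iff_nhds.mp hz (U ×ˢ U) (prod_mem_nhds hU hU)
  have e1 := hUδ _ hg1 g⁻¹
  have e2 := hUδ _ hg2 g⁻¹
  rw [inv_smul_smul] at e1 e2
  exact hδε ⟨_, e1, hδs.symm _ _ e2⟩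

/-- Pointwise distality gives pointwise almost periodicity of pairs. -/
theorem aux_distal_ap {G X : Type} [Group G] [TopologicalSpace G]
    [TopologicalSpace X] [T2Space X] [RegularSpace X]
    [MulAction G X] [ContinuousSMul G X]
    (hLag : ∀ x : X, IsCompact (closure (MulAction.orbit G x)))
    (h2 : ∀ x y : X, x ≠ y →
      closure (Set.range fun g : G => (g • x, g • y)) ∩ Set.diagonal X = ∅)
    (p q : X × X) (hq : q ∈ closure (MulAction.orbit G p)) :
    p ∈ closure (MulAction.orbit G q) := by
  let := Ultrafilter.semigroup (M := G)
  have hlim : ∀ (x : X) (u : Ultrafilter G), ∃ l, Tendsto (fun g : G => g • x) u (𝓝 l) := by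
    intro x u
    have : ((Ultrafilter.map (fun g : G => g • x) u : Ultrafilter X) : Filter X) ≤
        𝓟 (closure (MulAction.orbit G x)) := by
      rw [Filter.le_principal_iff]
      exact Filter.mem_map.mpr (Filter.univ_mem' fun g => subset_closure (MulAction.mem_orbit x g))
    obtain ⟨l, -, hl⟩ := (hLag x).ultrafilter_le_nhds _ this
    exact ⟨l, hl⟩
  choose L hL using hlim
  have hmul : ∀ x u v, L x (u * v) = L (L x v) u := by
    intro x u v
    refine tendsto_nhds_unique (hL x (u * v)) ?_
    refine (closed_nhds_basis (L (L x v) u)).tendsto_right_iff.mpr ?_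
    rintro A ⟨hA, hAc⟩
    rw [Ultrafilter.eventually_mul]
    have hAi : interior A ∈ 𝓝 (L (L x v) u) := interior_mem_nhds.mpr hA
    filter_upwards [(hL (L x v) u).eventually hAi] with m hm
    have hc : ContinuousAt (fun z : X => m • z) (L x v) := (continuous_const_smul m).continuousAt
    filter_upwards [(hc.tendsto.comp (hL x v)).eventually (isOpen_interior.mem_nhds hm)] with m' hm'
    rw [mul_smul]
    exact interior_subset hm'
  obtain ⟨v, hv⟩ : ∃ v : Ultrafilter G, Tendsto (fun g : G => g • p) v (𝓝 q) := by
    have : q ∈ closure (Set.range fun g : G => g • p) := hq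
    have hne : (comap (fun g : G => g • p) (𝓝 q)).NeBot :=
      by
      refine comap_neBot_iff.mpr fun t ht => ?_
      obtain ⟨_, hz, g, rfl⟩ := mem_closure_iff_nhds.mp this t ht
      exact ⟨g, hz⟩
    exact ⟨Ultrafilter.of _, tendsto_iff_comap.mpr (Ultrafilter.of_le _)⟩
  have hv1 : L p.1 v = q.1 := tendsto_nhds_unique (hL p.1 v) ((continuous_fst.tendsto q).comp hv)
  have hv2 : L p.2 v = q.2 := tendsto_nhds_unique (hL p.2 v) ((continuous_snd.tendsto q).comp hv)
  obtain ⟨e, ⟨w, rfl⟩, he⟩ := exists_idempotent_in_compact_subsemigroup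
    (Ultrafilter.continuous_mul_left (M := G)) (Set.range fun w : Ultrafilter G => w * v)
    (Set.range_nonempty _) (isCompact_range (Ultrafilter.continuous_mul_left v))
    (by
      rintro _ ⟨a, rfl⟩ _ ⟨b, rfl⟩
      exact ⟨a * v * b, by simp only [mul_assoc]⟩)
  have hfix : ∀ x, L x (w * v) = x := by
    intro x
    by_contra hne
    have hd := h2 _ _ hne
    have hmem : (L x (w * v), L x (w * v)) ∈
        closure (Set.range fun g : G => (g • (L x (w * v)), g • x)) := by
      have t1 := hL (L x (w * v)) (w * v)
      rw [← hmul, he] at t1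
      exact mem_closure_of_tendsto (t1.prodMk_nhds (hL x (w * v)))
        (Filter.Eventually.of_forall fun g => ⟨g, rfl⟩)
    exact (Set.eq_empty_iff_forall_notMem.mp hd _) ⟨hmem, rfl⟩
  have f1 := hfix p.1
  have f2 := hfix p.2
  rw [hmul, hv1] at f1
  rw [hmul, hv2] at f2
  have t := (hL q.1 w).prodMk_nhds (hL q.2 w)
  rw [f1, f2] at t
  exact mem_closure_of_tendsto t (Filter.Eventually.of_forall fun g => ⟨g, rfl⟩)

theorem aux_thick {G : Type} [Group G] {Γ : Set G} (hΓinv : Γ⁻¹ = Γ)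
    (hΓgen : ∀ g : G, ∃ r : ℕ, 1 ≤ r ∧ g ∈ Γ ^ r) (g : G) (r : ℕ) (hr : r + 1 ≤ len Γ g) :
    ∃ h ∈ Γ ^ (r + 1), ∀ f ∈ Γ ^ r, f * h ∈ Kset Γ g := by
  obtain ⟨k, hk⟩ := Nat.exists_eq_add_of_le' hr
  have hg := (aux_mem_len hΓgen g).2
  rw [hk, pow_add, Set.mem_mul] at hg
  obtain ⟨a, ha, h, hh, rfl⟩ := hg
  refine ⟨h, hh, fun f hf => ?_⟩
  rw [Kset, hk, show k + (r + 1) - 1 = r + k by omega, pow_add]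
  refine Set.mem_mul.mpr ⟨f * a⁻¹, Set.mul_mem_mul hf (aux_inv_pow hΓinv k ha), a * h, rfl, ?_⟩
  group

theorem aux_two_one {G X : Type} [Group G] [TopologicalSpace G] [ContinuousMul G]
    [TopologicalSpace X] [T2Space X] [RegularSpace X]
    [MulAction G X] [ContinuousSMul G X]
    (hLag : ∀ x : X, IsCompact (closure (MulAction.orbit G x)))
    {Γ : Set G} (hΓc : IsCompact Γ) (hΓ1 : (1 : G) ∈ Γ) (hΓinv : Γ⁻¹ = Γ)
    (hΓgen : ∀ g : G, ∃ r : ℕ, 1 ≤ r ∧ g ∈ Γ ^ r)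
    (h2 : ∀ x y : X, x ≠ y →
      closure (Set.range fun g : G => (g • x, g • y)) ∩ Set.diagonal X = ∅) :
    ∀ p : X × X, RecurrentI Γ p := by
  rintro p C ⟨ι, le, g, ⟨hne, hrefl, htrans, hdir⟩, -, htend, rfl⟩ U hU
  have hK : IsCompact (closure (MulAction.orbit G p)) := by
    refine ((hLag p.1).prod (hLag p.2)).of_isClosed_subset isClosed_closure ?_
    rw [← closure_prod_eq]
    apply closure_mono
    rintro _ ⟨a, rfl⟩
    exact ⟨⟨a, rfl⟩, ⟨a, rfl⟩⟩
  have hret : ∀ q ∈ closure (MulAction.orbit G p), ∃ f : G, f • q ∈ interior U := by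
    intro q hq
    obtain ⟨_, hz, f, rfl⟩ := mem_closure_iff_nhds.mp (aux_distal_ap hLag h2 p q hq) _
      (interior_mem_nhds.mpr hU)
    exact ⟨f, hz⟩
  obtain ⟨t, ht⟩ := hK.elim_finite_subcover (fun f : G => (fun q : X × X => f • q) ⁻¹' interior U)
    (fun f => isOpen_interior.preimage (continuous_const_smul f))
    (fun q hq => by
      obtain ⟨f, hf⟩ := hret q hq
      exact Set.mem_iUnion.mpr ⟨f, hf⟩)
  choose ρ hρ1 hρ using hΓgen
  let r := t.sup ρ
  have htr : ∀ f ∈ t, f ∈ Γ ^ r := fun f hf => aux_pow_mono hΓ1 (Finset.le_sup hf) (hρ f)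
  obtain ⟨i0, hi0⟩ := htend (r + 1)
  let : Preorder ι := { le := le, le_refl := hrefl, le_trans := htrans }
  have : IsDirectedOrder ι := ⟨hdir⟩
  have hth : ∀ j, ∃ h, i0 ≤ j → h ∈ Γ ^ (r + 1) ∧ ∀ f ∈ Γ ^ r, f * h ∈ Kset Γ (g j) := by
    intro j
    by_cases hj : i0 ≤ j
    · obtain ⟨h, hh⟩ := aux_thick hΓinv (fun g => ⟨ρ g, hρ1 g, hρ g⟩) (g j) r (hi0 j hj)
      exact ⟨h, fun _ => hh⟩
    · exact ⟨1, fun h => absurd h hj⟩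
  choose h hh using hth
  obtain ⟨h0, -, hh0⟩ := (aux_pow_compact hΓc (r + 1)).exists_mapClusterPt (u := h) (f := atTop)
    (by
      rw [Filter.le_principal_iff]
      exact (eventually_ge_atTop i0).mono fun j hj => (hh j hj).1)
  have hmem := ht (subset_closure (MulAction.mem_orbit p h0))
  simp only [Set.mem_iUnion] at hmem
  obtain ⟨f, hf, hfU⟩ := hmem
  refine ⟨f * h0, ?_, ?_⟩
  · intro V hV i
    obtain ⟨j1, hj1, hj1'⟩ := hdir i i0
    have hpre : (fun x => f * x) ⁻¹' V ∈ 𝓝 h0 :=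
      (continuous_const_mul f).continuousAt.preimage_mem_nhds hV
    obtain ⟨j, hj, hjV⟩ := Filter.frequently_atTop.mp (hh0.frequently hpre) j1
    exact ⟨j, htrans _ _ _ hj1 hj, f * h j, hjV,
      (hh j (htrans _ _ _ hj1' hj)).2 f (htr f hf)⟩
  · rw [mul_smul]
    exact interior_subset hfU

/-- for a flow on a 0-dimensional space with compactly generated phase
group, pointwise product Γ-recurrence of type I, distality, and equicontinuity are
pairwise equivalent. -/
theorem statement4 {G X : Type} [Group G] [TopologicalSpace G] [T2Space G]
    [ContinuousMul G] [UniformSpace X] [T2Space X] [LocallyCompactSpace X]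
    [MulAction G X] [ContinuousSMul G X]
    (hLag : ∀ x : X, IsCompact (closure (MulAction.orbit G x)))
    (Γ : Set G) (hΓc : IsCompact Γ) (hΓ1 : (1 : G) ∈ Γ) (hΓinv : Γ⁻¹ = Γ)
    (hΓgen : ∀ g : G, ∃ r : ℕ, 1 ≤ r ∧ g ∈ Γ ^ r)
    (h0dim : ∀ x : X, ∀ U ∈ 𝓝 x, ∃ V : Set X, IsClopen V ∧ x ∈ V ∧ V ⊆ U) :
    List.TFAE
      [ (∀ p : X × X, RecurrentI Γ p),
        (∀ x y : X, x ≠ y →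
          closure (Set.range fun g : G => (g • x, g • y)) ∩ Set.diagonal X = ∅),
        (∀ x : X, ∀ ε ∈ 𝓤 X, ∃ U ∈ 𝓝 x, ∀ y ∈ U, ∀ g : G, (g • y, g • x) ∈ ε) ] := by
  tfae_have 1 → 3 := aux_one_three hLag hΓc hΓ1 hΓinv hΓgen h0dim
  tfae_have 3 → 2 := aux_three_two
  tfae_have 2 → 1 := aux_two_one hLag hΓc hΓ1 hΓinv hΓgen
  tfae_finish
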